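/- Let S be a finite alphabet, n ∈ ℕ and L ⊆ S^n. Then the counting winning set satisfies |W̃(L)| = |L|, and moreover W(W̃(L)) = W(L), where W(W̃(L)) is the winning set of the word game over the alphabet {1,…,|S|} with target set W̃(L). -/

import Mathlib

/-!
Word games (Salo–Törmä, "Playing with Subshifts").
The players' alphabet is `Bool`: player `A` is `false`, player `B` is `true`
(so that the order `A < B` is the order `false < true` on `Bool`).
-/

/-- Auxiliary function for the play of a finite ordered word game: the word built so far
is accumulated in the second argument, and at each step the player indicated by the
turn order picks the next letter as a function of the word built so far. -/
def playAux {S : Type*} (sA sB : List S → S) : List Bool → List S → List S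
  | [], w => w
  | b :: rest, w => playAux sA sB rest (w ++ [(if b then sB else sA) w])

/-- The play of the finite ordered word game with turn order `a`,
where `A` uses strategy `sA` and `B` uses strategy `sB`. -/
def play {S : Type*} (sA sB : List S → S) (a : List Bool) : List S :=
  playAux sA sB a []

/-- The winning set `W(X)` of a target set `X` of finite words: the set of turn orders
for which `A` has a winning strategy. -/
def Wset {S : Type*} (X : Set (List S)) : Set (List Bool) :=
  { a | ∃ sA : List S → S, ∀ sB : List S → S, play sA sB a ∈ X }

/-- Auxiliary function for the play of the counting game: at each step, `A` offers a
set of letters (a function of the word built so far) and `B` picks a letter from it. -/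
def cplayAux {S : Type*} (sA : List S → Finset S) (sB : List S → Finset S → S) :
    ℕ → List S → List S
  | 0, w => w
  | n + 1, w => cplayAux sA sB n (w ++ [sB w (sA w)])

/-- The play of the counting game of length `n`. -/
def cplay {S : Type*} (sA : List S → Finset S) (sB : List S → Finset S → S) (n : ℕ) :
    List S :=
  cplayAux sA sB n []

/-- The counting winning set `W̃(X) ⊆ {1,…,|S|}^n` of a target set `X ⊆ S^n`: the set
of parameter words `a` such that `A` can offer, at each coordinate `i`, a set of
exactly `a_i` letters (depending on the word built so far) so that whatever letters
`B` picks from the offered sets, the resulting word lies in `X`. -/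
def CWset {S : Type*} [Fintype S] (X : Set (List S)) :
    Set (List { i : ℕ // 1 ≤ i ∧ i ≤ Fintype.card S }) :=
  { a | ∃ sA : List S → Finset S, ∀ sB : List S → Finset S → S,
      (∀ (w : List S) (T : Finset S), T.Nonempty → sB w T ∈ T) →
      cplay sA sB a.length ∈ X ∧
        ∀ i : Fin a.length, (sA ((cplay sA sB a.length).take i.val)).card = (a.get i).val }

/-- Left quotient of a set of words by a letter. -/
def quo {S : Type*} (c : S) (X : Set (List S)) : Set (List S) := { w | c :: w ∈ X }

theorem playAux_cons {S : Type*} (sA sB : List S → S) (c : S) (a : List Bool) :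
    ∀ w, playAux sA sB a (c :: w) =
      c :: playAux (fun v => sA (c :: v)) (fun v => sB (c :: v)) a w := by
  induction a with
  | nil => intro w; rfl
  | cons b a ih =>
    intro w
    cases b <;> simp [playAux, ← ih]

theorem cplayAux_cons {S : Type*} (sA : List S → Finset S) (sB : List S → Finset S → S) (c : S)
    (n : ℕ) :
    ∀ w, cplayAux sA sB n (c :: w) =
      c :: cplayAux (fun v => sA (c :: v)) (fun v => sB (c :: v)) n w := by
  induction n with
  | zero => intro w; rfl
  | succ n ih =>
    intro w
    simp [cplayAux, ← ih]

theorem play_cons {S : Type*} (sA sB : List S → S) (b : Bool) (a : List Bool) :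
    play sA sB (b :: a) = (if b then sB else sA) [] ::
      play (fun v => sA ((if b then sB else sA) [] :: v))
        (fun v => sB ((if b then sB else sA) [] :: v)) a := by
  rw [play, play, playAux, List.nil_append, playAux_cons]

theorem cplay_succ {S : Type*} (sA : List S → Finset S) (sB : List S → Finset S → S) (n : ℕ) :
    cplay sA sB (n + 1) = sB [] (sA []) ::
      cplay (fun v => sA (sB [] (sA []) :: v)) (fun v => sB (sB [] (sA []) :: v)) n := by
  rw [cplay, cplay, cplayAux, List.nil_append, cplayAux_cons]

theorem cplay_length_cons {S : Type*} {K : Type*} (sA : List S → Finset S)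
    (sB : List S → Finset S → S) (k : K) (a : List K) :
    cplay sA sB (k :: a).length = sB [] (sA []) ::
      cplay (fun v => sA (sB [] (sA []) :: v)) (fun v => sB (sB [] (sA []) :: v)) a.length :=
  cplay_succ sA sB a.length

theorem Wset_nil {S : Type*} [Nonempty S] (X : Set (List S)) : [] ∈ Wset X ↔ [] ∈ X := by
  simp [Wset, play, playAux]

theorem Wset_false {S : Type*} [Nonempty S] (X : Set (List S)) (a : List Bool) :
    false :: a ∈ Wset X ↔ ∃ c, a ∈ Wset (quo c X) := by
  constructor
  · rintro ⟨sA, h⟩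
    refine ⟨sA [], fun v => sA (sA [] :: v), fun sB => ?_⟩
    have := h (fun l => sB l.tail)
    rw [play_cons] at this
    simpa [quo] using this
  · rintro ⟨c, sA, h⟩
    refine ⟨fun l => match l with | [] => c | _ :: v => sA v, fun sB => ?_⟩
    rw [play_cons]
    exact h (fun v => sB (c :: v))

theorem Wset_true {S : Type*} [Nonempty S] (X : Set (List S)) (a : List Bool) :
    true :: a ∈ Wset X ↔ ∀ c, a ∈ Wset (quo c X) := by
  constructor
  · rintro ⟨sA, h⟩ c
    refine ⟨fun v => sA (c :: v), fun sB => ?_⟩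
    have := h (fun l => match l with | [] => c | _ :: v => sB v)
    rw [play_cons] at this
    exact this
  · intro h
    choose f hf using h
    refine ⟨fun l => match l with | [] => Classical.arbitrary S | c :: v => f c v, fun sB => ?_⟩
    rw [play_cons]
    exact hf (sB []) (fun v => sB (sB [] :: v))

theorem exists_valid (S : Type*) [Nonempty S] :
    ∃ g : Finset S → S, ∀ T : Finset S, T.Nonempty → g T ∈ T := by
  classical
  refine ⟨fun T => if h : T.Nonempty then h.choose else Classical.arbitrary S, fun T h => ?_⟩
  simp only [h, dif_pos]
  exact h.choose_spec

theorem CWset_nil {S : Type*} [Fintype S] [Nonempty S] (X : Set (List S)) :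
    [] ∈ CWset X ↔ [] ∈ X := by
  obtain ⟨g, hg⟩ := exists_valid S
  constructor
  · rintro ⟨sA, h⟩
    exact (h (fun _ => g) (fun _ => hg)).1
  · intro h
    exact ⟨fun _ => ∅, fun sB _ => ⟨h, fun i => i.elim0⟩⟩

theorem CWset_cons {S : Type*} [Fintype S] [Nonempty S] (X : Set (List S))
    (k : { i : ℕ // 1 ≤ i ∧ i ≤ Fintype.card S }) (a) :
    k :: a ∈ CWset X ↔ ∃ T : Finset S, T.card = k.val ∧ ∀ c ∈ T, a ∈ CWset (quo c X) := by
  classical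
  obtain ⟨g, hg⟩ := exists_valid S
  constructor
  · rintro ⟨sA, h⟩
    refine ⟨sA [], ?_, fun c hc => ?_⟩
    · exact (h (fun _ => g) (fun _ => hg)).2 ⟨0, by simp⟩
    · refine ⟨fun v => sA (c :: v), fun sB hsB => ?_⟩
      have := h (fun l T => match l with
        | [] => if T = sA [] then c else g T
        | _ :: v => sB v T) (by
          intro w T hT
          cases w with
          | nil =>
            by_cases e : T = sA []
            · simp [e, hc]
            · simpa [e] using hg T hT
          | cons d w => exact hsB w T hT)
      rw [cplay_length_cons] at this
      simp only [if_true] at this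
      refine ⟨this.1, fun i => ?_⟩
      exact this.2 i.succ
  · rintro ⟨T, hT, h⟩
    have h' : ∀ c, ∃ sA : List S → Finset S, c ∈ T → ∀ sB : List S → Finset S → S,
      (∀ (w : List S) (T : Finset S), T.Nonempty → sB w T ∈ T) →
      cplay sA sB a.length ∈ quo c X ∧
        ∀ i : Fin a.length,
          (sA ((cplay sA sB a.length).take i.val)).card = (a.get i).val := by
      intro c
      by_cases hc : c ∈ T
      · obtain ⟨sA, hs⟩ := h c hc
        exact ⟨sA, fun _ => hs⟩
      · exact ⟨fun _ => ∅, fun h => absurd h hc⟩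
    choose f hf using h'
    refine ⟨fun l => match l with | [] => T | c :: v => f c v, fun sB hsB => ?_⟩
    have hTn : T.Nonempty := by
      rw [← Finset.card_pos, hT]; exact k.2.1
    have := hf (sB [] T) (hsB _ _ hTn) (fun v => sB (sB [] T :: v)) (fun w => hsB _)
    rw [cplay_length_cons]
    refine ⟨this.1, fun i => ?_⟩
    refine Fin.cases ?_ (fun j => ?_) i
    · exact hT
    · exact this.2 j

open Classical in
theorem CWset_cons' {S : Type*} [Fintype S] [Nonempty S] (X : Set (List S))
    (k : { i : ℕ // 1 ≤ i ∧ i ≤ Fintype.card S }) (a) :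
    k :: a ∈ CWset X ↔ k.val ≤ Fintype.card { c // a ∈ CWset (quo c X) } := by
  rw [CWset_cons, Fintype.card_subtype]
  constructor
  · rintro ⟨T, hT, h⟩
    rw [← hT]
    exact Finset.card_le_card fun c hc => by simpa using h c hc
  · intro h
    obtain ⟨T, hT, hc⟩ := Finset.exists_subset_card_eq h
    exact ⟨T, hc, fun c hc => by simpa using hT hc⟩

theorem CWset_down {S : Type*} [Fintype S] [Nonempty S]
    {a b : List { i : ℕ // 1 ≤ i ∧ i ≤ Fintype.card S }} (h : List.Forall₂ (· ≤ ·) a b) :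
    ∀ X : Set (List S), b ∈ CWset X → a ∈ CWset X := by
  induction h with
  | nil => exact fun X h => h
  | cons hk _ ih =>
    intro X hb
    rw [CWset_cons] at hb
    obtain ⟨T, hT, h⟩ := hb
    obtain ⟨T', hT', hc⟩ := Finset.exists_subset_card_eq (s := T) (le_of_le_of_eq hk hT.symm)
    rw [CWset_cons]
    exact ⟨T', hc, fun c hc => ih _ (h c (hT' hc))⟩

/-- The extremal parameter word of a turn order. -/
def phi (N : ℕ) (hN : 1 ≤ N) (a : List Bool) : List { i : ℕ // 1 ≤ i ∧ i ≤ N } :=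
  a.map fun b => if b then ⟨N, hN, le_rfl⟩ else ⟨1, le_rfl, hN⟩

theorem Wset_down (N : ℕ) (hN : 1 ≤ N) (a : List Bool) :
    ∀ D : Set (List { i : ℕ // 1 ≤ i ∧ i ≤ N }),
      (∀ a b, List.Forall₂ (· ≤ ·) a b → b ∈ D → a ∈ D) → (a ∈ Wset D ↔ phi N hN a ∈ D) := by
  have : Nonempty { i : ℕ // 1 ≤ i ∧ i ≤ N } := ⟨⟨1, le_rfl, hN⟩⟩
  induction a with
  | nil => intro D _; exact Wset_nil D
  | cons b a ih =>
    intro D hD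
    have hq : ∀ c, a ∈ Wset (quo c D) ↔ phi N hN a ∈ quo c D := fun c =>
      ih _ fun x y hxy hy => hD (c :: x) (c :: y) (List.Forall₂.cons le_rfl hxy) hy
    cases b
    · rw [Wset_false]
      simp only [hq]
      constructor
      · rintro ⟨c, hc⟩
        exact hD _ (c :: phi N hN a) (List.Forall₂.cons c.2.1 (List.forall₂_refl _)) hc
      · intro h; exact ⟨_, h⟩
    · rw [Wset_true]
      simp only [hq]
      constructor
      · intro h; exact h _
      · intro h c
        exact hD (c :: phi N hN a) _ (List.Forall₂.cons c.2.2 (List.forall₂_refl _)) h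

theorem phi_mem {S : Type*} [Fintype S] [Nonempty S] (hN : 1 ≤ Fintype.card S) (a : List Bool) :
    ∀ X : Set (List S), phi (Fintype.card S) hN a ∈ CWset X ↔ a ∈ Wset X := by
  induction a with
  | nil => intro X; exact (CWset_nil X).trans (Wset_nil X).symm
  | cons b a ih =>
    intro X
    cases b
    · rw [Wset_false]
      refine (CWset_cons X ⟨1, le_rfl, hN⟩ (phi _ hN a)).trans ?_
      simp only [ih, Finset.card_eq_one]
      constructor
      · rintro ⟨T, ⟨c, rfl⟩, h⟩
        exact ⟨c, h c (by simp)⟩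
      · rintro ⟨c, h⟩
        exact ⟨{c}, ⟨c, rfl⟩, by simpa using h⟩
    · rw [Wset_true]
      refine (CWset_cons X ⟨_, hN, le_rfl⟩ (phi _ hN a)).trans ?_
      simp only [ih, Finset.card_eq_iff_eq_univ]
      simp

/-- Splitting a set of nonempty words by first letter. -/
def splitEquiv {S : Type*} (X : Set (List S)) (h : [] ∉ X) : X ≃ Σ c, quo c X where
  toFun w := match w with
    | ⟨[], hw⟩ => absurd hw h
    | ⟨c :: w, hw⟩ => ⟨c, w, hw⟩
  invFun p := ⟨p.1 :: p.2.1, p.2.2⟩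
  left_inv w := by
    rcases w with ⟨_ | ⟨c, w⟩, hw⟩
    · exact absurd hw h
    · rfl
  right_inv p := rfl

/-- Exchanging the order of a dependent sum of sets. -/
def swapEquiv {α β : Type*} (R : α → Set β) : (Σ a, R a) ≃ Σ b, { a // b ∈ R a } where
  toFun p := ⟨p.2.1, p.1, p.2.2⟩
  invFun p := ⟨p.2.1, p.1, p.2.2⟩
  left_inv _ := rfl
  right_inv _ := rfl

theorem fiber_equiv {S : Type*} [Fintype S] (P : S → Prop) [Fintype {c // P c}] :
    Nonempty ({ k : { i : ℕ // 1 ≤ i ∧ i ≤ Fintype.card S } // k.val ≤ Fintype.card {c // P c} }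
      ≃ {c // P c}) := by
  have hm : Fintype.card {c // P c} ≤ Fintype.card S :=
    Fintype.card_le_of_injective _ Subtype.val_injective
  generalize hM : Fintype.card {c // P c} = m at hm
  have e1 : { k : { i : ℕ // 1 ≤ i ∧ i ≤ Fintype.card S } // k.val ≤ m } ≃ Fin m :=
    { toFun := fun k => ⟨k.1.1 - 1, by have := k.1.2; have := k.2; omega⟩
      invFun := fun j => ⟨⟨j.1 + 1, by have := j.2; omega⟩, j.2⟩
      left_inv := fun k => by
        have := k.1.2
        apply Subtype.ext; apply Subtype.ext
        show k.1.1 - 1 + 1 = k.1.1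
        omega
      right_inv := fun j => by
        apply Fin.ext
        show j.1 + 1 - 1 = j.1
        omega }
  exact ⟨e1.trans (Fintype.equivFinOfCardEq hM).symm⟩

theorem CWset_equiv {S : Type*} [Fintype S] [Nonempty S] (n : ℕ) :
    ∀ L : Set (List S), (∀ w ∈ L, w.length = n) → Nonempty (CWset L ≃ L) := by
  classical
  induction n with
  | zero =>
    intro L hL
    have h1 : ∀ a ∈ CWset L, a = [] := by
      intro a ha
      cases a with
      | nil => rfl
      | cons k a =>
        exfalso
        obtain ⟨g, hg⟩ := exists_valid S
        obtain ⟨sA, h⟩ := ha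
        have := hL _ (h (fun _ => g) (fun _ => hg)).1
        rw [List.length_cons, cplay_succ] at this
        simp at this
    have h2 : ∀ w ∈ L, w = [] := fun w hw => List.length_eq_zero_iff.1 (hL w hw)
    refine ⟨⟨fun a => ⟨[], ?_⟩, fun w => ⟨[], ?_⟩, fun a => ?_, fun w => ?_⟩⟩
    · rw [← CWset_nil, ← h1 a.1 a.2]; exact a.2
    · rw [CWset_nil, ← h2 w.1 w.2]; exact w.2
    · exact Subtype.ext (h1 a.1 a.2).symm
    · exact Subtype.ext (h2 w.1 w.2).symm
  | succ n ih =>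
    intro L hL
    have hn : [] ∉ L := fun h => by simpa using hL _ h
    have hn' : [] ∉ CWset L := by rwa [CWset_nil]
    have e1 : ∀ c, Nonempty (CWset (quo c L) ≃ quo c L) := fun c =>
      ih _ fun w hw => by simpa using hL _ hw
    have e2 : ∀ a, Nonempty ({ k // a ∈ quo k (CWset L) } ≃ { c // a ∈ CWset (quo c L) }) := by
      intro a
      obtain ⟨e⟩ := fiber_equiv (fun c => a ∈ CWset (quo c L))
      exact ⟨(Equiv.subtypeEquivRight fun k => CWset_cons' L k a).trans e⟩
    exact ⟨(splitEquiv _ hn').trans <| (swapEquiv _).trans <|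
      (Equiv.sigmaCongrRight fun a => (e2 a).some).trans <|
      (swapEquiv fun c => CWset (quo c L)).symm.trans <|
      (Equiv.sigmaCongrRight fun c => (e1 c).some).trans (splitEquiv _ hn).symm⟩

/-- For `L ⊆ S^n`, the counting winning set satisfies
`|W̃(L)| = |L|`, and the winning set of the word game over the alphabet `{1,…,|S|}`
with target set `W̃(L)` equals `W(L)`. -/
theorem card_countingWinningSet_and_winningSet {S : Type*} [Fintype S] [Nonempty S]
    (n : ℕ) (L : Set (List S)) (hL : ∀ w ∈ L, w.length = n) :
    (CWset L).ncard = L.ncard ∧ Wset (CWset L) = Wset L := by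
  constructor
  · obtain ⟨e⟩ := CWset_equiv n L hL
    exact Nat.card_congr e
  · ext a
    have hN : 1 ≤ Fintype.card S := Fintype.card_pos
    rw [Wset_down _ hN a _ fun x y hxy hy => CWset_down hxy L hy, phi_mem]
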